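/- In the special case a = α = β = 0 (so b = N), the following initial-value formulas hold: (i) R̂_0(s) = √(2s+1)/N for every integer s with 0 ≤ s ≤ N−1 (in particular R̂_0(N−1) = √(2N−1)/N and R̂_0(s) = √((2s+1)/(2s+3))·R̂_0(s+1)); (ii) R̂_1(s) = −(N² − 2s² − 2s − 1)·√3/(N²−1)·R̂_0(s) for every integer s with 0 ≤ s ≤ N−1; and (iii) R̂_{n+1}(N−1) = [(N−n−1)/(N+n+1)]·√((2n+3)/(2n+1))·R̂_n(N−1) for every integer n with 0 ≤ n ≤ N−2. -/

import Mathlib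

open Finset

/-- Rising Pochhammer symbol `(x)_k = x (x+1) ⋯ (x+k-1)` for a real `x`. -/
noncomputable def pochR (x : ℝ) (k : ℕ) : ℝ := ∏ i ∈ Finset.range k, (x + i)

/-- The `n`-th Racah polynomial in Zhu's normalization. -/
noncomputable def racahR (a b α β : ℝ) (n : ℕ) (s : ℝ) : ℝ :=
  (1 / (Nat.factorial n : ℝ)) * pochR (a + b + α + 1) n * pochR (β + 1) n *
    pochR (a - b + 1) n *
    ∑ k ∈ Finset.range (n + 1),
      pochR (-(n : ℝ)) k * pochR (a - s) k * pochR (a + s + 1) k *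
          pochR (α + β + (n : ℝ) + 1) k /
        (pochR (β + 1) k * pochR (a + b + α + 1) k * pochR (a - b + 1) k *
          (Nat.factorial k : ℝ))

/-- The Racah weight function `ρ(s)`. -/
noncomputable def racahW (a b α β : ℝ) (s : ℝ) : ℝ :=
  Real.Gamma (a + s + 1) * Real.Gamma (b + s + α + 1) * Real.Gamma (b + α - s) *
      Real.Gamma (s - a + β + 1) /
    (Real.Gamma (b + s + 1) * Real.Gamma (b - s) * Real.Gamma (s - a + 1) *
      Real.Gamma (a - β + s + 1))

/-- The squared norm `d_n²`. -/
noncomputable def racahD2 (a b α β : ℝ) (n : ℕ) : ℝ :=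
  Real.Gamma (α + n + 1) * Real.Gamma (β + n + 1) * Real.Gamma (a + b + α + n + 1) *
      Real.Gamma (b - a + α + β + n + 1) /
    ((α + β + 2 * n + 1) * Real.Gamma (n + 1) * Real.Gamma (b - a - n) *
      Real.Gamma (α + β + n + 1) * Real.Gamma (a + b - n - β))

/-- The weighted Racah polynomial `R̂_n(s) = R_n(s) √(ρ(s)(2s+1)/d_n²)`. -/
noncomputable def racahHat (a b α β : ℝ) (n : ℕ) (s : ℝ) : ℝ :=
  racahR a b α β n s * Real.sqrt (racahW a b α β s * (2 * s + 1) / racahD2 a b α β n)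

/-- `σ(s) = (s−a)(s+b)(s+a−β)(b+α−s)`. -/
noncomputable def racahSigma (a b α β : ℝ) (s : ℝ) : ℝ :=
  (s - a) * (s + b) * (s + a - β) * (b + α - s)

/-- `τ(s)`. -/
noncomputable def racahTau (a b α β : ℝ) (s : ℝ) : ℝ :=
  a * (α + 1) * (a - β) + b * (b + α) * (β + 1) - (α + 1) * (β + 1) -
    s * (s + 1) * (α + β + 2)

/-- `λ_n = n (n+α+β+1)`. -/
noncomputable def racahLam (α β : ℝ) (n : ℕ) : ℝ := (n : ℝ) * ((n : ℝ) + α + β + 1)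

lemma pochR_succ' (x : ℝ) (k : ℕ) : pochR x (k + 1) = pochR x k * (x + k) := by
  simp [pochR, Finset.prod_range_succ]

lemma pochR_zero' (x : ℝ) : pochR x 0 = 1 := by simp [pochR]

lemma pochR_shift (x : ℝ) (k : ℕ) : pochR (x + 1) k * x = pochR x k * (x + k) := by
  induction k with
  | zero => simp [pochR_zero']
  | succ k ih =>
    rw [pochR_succ', pochR_succ']
    push_cast
    linear_combination (x + 1 + k) * ih

lemma pochR_one (k : ℕ) : pochR 1 k = (Nat.factorial k : ℝ) := by
  induction k with
  | zero => simp [pochR_zero']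
  | succ k ih =>
    rw [pochR_succ', ih, Nat.factorial_succ]
    push_cast
    ring

lemma pochR_pos {x : ℝ} (hx : 0 < x) (k : ℕ) : 0 < pochR x k :=
  Finset.prod_pos fun i _ => by positivity

lemma pochR_neg_self (n : ℕ) : pochR (-(n : ℝ)) (n + 1) = 0 := by
  rw [pochR_succ']; simp

lemma pochR_negN_ne (N n : ℕ) (h : n + 1 ≤ N) : pochR (1 - (N : ℝ)) n ≠ 0 := by
  unfold pochR
  refine Finset.prod_ne_zero_iff.2 fun i hi => ?_
  have hi' : i + 1 < N := by have := Finset.mem_range.1 hi; omega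
  have : (i : ℝ) + 1 < N := by exact_mod_cast hi'
  intro h0
  linarith

/-- The summand of the Saalschützian sum. -/
noncomputable def sTerm (x : ℝ) (n k : ℕ) : ℝ :=
  pochR (-(n : ℝ)) k * pochR ((n : ℝ) + 1) k / (Nat.factorial k : ℝ) ^ 2 * (x / (x + k))

/-- Auxiliary telescoping summand. -/
noncomputable def uTerm (n k : ℕ) : ℝ :=
  pochR (-(n : ℝ) - 1) k * pochR ((n : ℝ) + 1) k / (Nat.factorial k : ℝ) ^ 2

lemma uTerm_sum (n m : ℕ) :
    (∑ k ∈ Finset.range m, uTerm n k) * ((n : ℝ) + 1) ^ 2 = -(m : ℝ) ^ 2 * uTerm n m := by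
  induction m with
  | zero => simp
  | succ m ih =>
    have hf : (Nat.factorial m : ℝ) ≠ 0 := by positivity
    have h : ((m : ℝ) + 1) ^ 2 * uTerm n (m + 1)
        = uTerm n m * ((m : ℝ) ^ 2 - ((n : ℝ) + 1) ^ 2) := by
      unfold uTerm
      rw [pochR_succ', pochR_succ', Nat.factorial_succ]
      push_cast
      field_simp
      ring
    rw [Finset.sum_range_succ]
    push_cast
    linear_combination ih + h

lemma sTerm_rec (x : ℝ) (hx : 0 < x) (n k : ℕ) :
    ((n : ℝ) + 1 + x) * sTerm x (n + 1) k - ((n : ℝ) + 1 - x) * sTerm x n k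
      = 2 * x * uTerm n k := by
  have hf : (Nat.factorial k : ℝ) ≠ 0 := by positivity
  have hxk : x + k ≠ 0 := by positivity
  have hn : (n : ℝ) + 1 ≠ 0 := by positivity
  have h1 := pochR_shift (-(n : ℝ) - 1) k
  have h2 := pochR_shift ((n : ℝ) + 1) k
  rw [sub_add_cancel] at h1
  have e : -((n : ℝ) + 1) = -(n : ℝ) - 1 := by ring
  unfold sTerm uTerm
  push_cast
  rw [e]
  have h1' : pochR (-(n : ℝ)) k = pochR (-(n : ℝ) - 1) k * ((n : ℝ) + 1 - k) / ((n : ℝ) + 1) := by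
    rw [eq_div_iff hn]; linear_combination -h1
  have h2' : pochR ((n : ℝ) + 1 + 1) k
      = pochR ((n : ℝ) + 1) k * ((n : ℝ) + 1 + k) / ((n : ℝ) + 1) := by
    rw [eq_div_iff hn]; linear_combination h2
  rw [h1', h2']
  field_simp
  ring

lemma sTerm_sum (x : ℝ) (hx : 0 < x) (n : ℕ) :
    (∑ k ∈ Finset.range (n + 1), sTerm x n k) * pochR (x + 1) n = pochR (1 - x) n := by
  induction n with
  | zero => simp [sTerm, pochR_zero', hx.ne']
  | succ n ih =>
    have hu : ∑ k ∈ Finset.range (n + 1 + 1), uTerm n k = 0 := by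
      have h := uTerm_sum n (n + 1 + 1)
      have h0 : uTerm n (n + 1 + 1) = 0 := by
        have := pochR_neg_self (n + 1)
        push_cast at this
        unfold uTerm
        rw [show -(n : ℝ) - 1 = -((n : ℝ) + 1) by ring, this]
        simp
      rw [h0, mul_zero] at h
      have hn : ((n : ℝ) + 1) ^ 2 ≠ 0 := by positivity
      exact (mul_eq_zero.1 h).resolve_right hn
    have hs : ∑ k ∈ Finset.range (n + 1 + 1), sTerm x n k
        = ∑ k ∈ Finset.range (n + 1), sTerm x n k := by
      rw [Finset.sum_range_succ]
      simp [sTerm, pochR_neg_self]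
    have hr : ((n : ℝ) + 1 + x) * ∑ k ∈ Finset.range (n + 1 + 1), sTerm x (n + 1) k
        - ((n : ℝ) + 1 - x) * ∑ k ∈ Finset.range (n + 1 + 1), sTerm x n k = 0 := by
      rw [Finset.mul_sum, Finset.mul_sum, ← Finset.sum_sub_distrib,
        Finset.sum_congr rfl fun k _ => sTerm_rec x hx n k, ← Finset.mul_sum, hu, mul_zero]
    rw [hs] at hr
    rw [pochR_succ', pochR_succ']
    linear_combination pochR (x + 1) n * hr + ((n : ℝ) + 1 - x) * ih

lemma racahR_end (N n : ℕ) (h : n + 1 ≤ N) :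
    racahR 0 (N : ℝ) 0 0 n ((N : ℝ) - 1) = pochR (1 - (N : ℝ)) n ^ 2 := by
  have hN : (0 : ℝ) < N := by exact_mod_cast (by omega : 0 < N)
  rw [sq]
  nth_rewrite 1 [← sTerm_sum (N : ℝ) hN n]
  unfold racahR
  have e1 : (0 : ℝ) + N + 0 + 1 = N + 1 := by ring
  have e2 : (0 : ℝ) - N + 1 = 1 - N := by ring
  have e3 : (0 : ℝ) - (N - 1) = 1 - N := by ring
  have e4 : (0 : ℝ) + (N - 1) + 1 = N := by ring
  have e5 : (0 : ℝ) + 0 + n + 1 = n + 1 := by ring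
  rw [e1, e2, e3, e4, e5, zero_add, pochR_one]
  have hs : ∀ k ∈ Finset.range (n + 1),
      pochR (-(n : ℝ)) k * pochR (1 - (N : ℝ)) k * pochR (N : ℝ) k * pochR ((n : ℝ) + 1) k /
        (pochR 1 k * pochR ((N : ℝ) + 1) k * pochR (1 - (N : ℝ)) k * (Nat.factorial k : ℝ))
      = sTerm (N : ℝ) n k := by
    intro k hk
    have hk' : k + 1 ≤ N := by have := Finset.mem_range.1 hk; omega
    have h1 := pochR_negN_ne N k hk'
    have h2 := (pochR_pos (by positivity : (0 : ℝ) < N + 1) k).ne'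
    have hf : (Nat.factorial k : ℝ) ≠ 0 := by positivity
    have hxk : (N : ℝ) + k ≠ 0 := by positivity
    have h3 : pochR (N : ℝ) k = pochR ((N : ℝ) + 1) k * N / (N + k) := by
      rw [eq_div_iff hxk, pochR_shift]
    unfold sTerm
    rw [h3, pochR_one]
    field_simp
  rw [Finset.sum_congr rfl hs]
  have hf : (Nat.factorial n : ℝ) ≠ 0 := by positivity
  field_simp

lemma racahW_one (N : ℕ) (s : ℝ) (h0 : 0 ≤ s) (h1 : s < N) : racahW 0 (N : ℝ) 0 0 s = 1 := by
  unfold racahW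
  simp only [zero_add, add_zero, sub_zero]
  have a1 := (Real.Gamma_pos_of_pos (by linarith : 0 < s + 1)).ne'
  have a2 := (Real.Gamma_pos_of_pos (by linarith : 0 < (N : ℝ) + s + 1)).ne'
  have a3 := (Real.Gamma_pos_of_pos (by linarith : 0 < (N : ℝ) - s)).ne'
  field_simp

lemma racahD2_eq (N n : ℕ) (h : n + 1 ≤ N) :
    racahD2 0 (N : ℝ) 0 0 n
      = (Real.Gamma (N + n + 1) / Real.Gamma ((N : ℝ) - n)) ^ 2 / (2 * n + 1) := by
  have h' : (n : ℝ) + 1 ≤ N := by exact_mod_cast h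
  unfold racahD2
  simp only [zero_add, add_zero, sub_zero]
  have a1 := (Real.Gamma_pos_of_pos (by positivity : (0 : ℝ) < n + 1)).ne'
  have a3 := (Real.Gamma_pos_of_pos (by linarith : 0 < (N : ℝ) - n)).ne'
  field_simp

lemma racahD2_zero (N : ℕ) (h : 1 ≤ N) : racahD2 0 (N : ℝ) 0 0 0 = (N : ℝ) ^ 2 := by
  have h' : (0 : ℝ) < N := by exact_mod_cast h
  rw [racahD2_eq N 0 (by omega)]
  have a3 := (Real.Gamma_pos_of_pos h').ne'
  simp [Real.Gamma_add_one h'.ne', a3]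

lemma racahD2_succ (N n : ℕ) (h : n + 2 ≤ N) :
    racahD2 0 (N : ℝ) 0 0 (n + 1)
      = racahD2 0 (N : ℝ) 0 0 n * (((N : ℝ) + n + 1) * ((N : ℝ) - n - 1)) ^ 2
        * ((2 * n + 1) / (2 * n + 3)) := by
  have h' : (n : ℝ) + 2 ≤ N := by exact_mod_cast h
  rw [racahD2_eq N n (by omega), racahD2_eq N (n + 1) (by omega)]
  have hp : (0 : ℝ) < (N : ℝ) - n - 1 := by linarith
  have a3 := (Real.Gamma_pos_of_pos hp).ne'
  have g1 : Real.Gamma ((N : ℝ) - n) = ((N : ℝ) - n - 1) * Real.Gamma ((N : ℝ) - n - 1) := by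
    rw [← Real.Gamma_add_one hp.ne']; congr 1; ring
  have hq : (N : ℝ) + n + 1 ≠ 0 := by positivity
  have g2 : Real.Gamma ((N : ℝ) + n + 1 + 1)
      = ((N : ℝ) + n + 1) * Real.Gamma ((N : ℝ) + n + 1) := Real.Gamma_add_one hq
  push_cast
  rw [show (N : ℝ) - (n + 1) = N - n - 1 by ring,
    show (N : ℝ) + (n + 1) + 1 = N + n + 1 + 1 by ring, g1, g2]
  have hp' := hp.ne'
  have e : (2 * ((n : ℝ) + 1) + 1) = 2 * n + 3 := by ring
  rw [e]
  field_simp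

lemma sqrt_succ (N n : ℕ) (h : n + 2 ≤ N) (y : ℝ) :
    Real.sqrt (y / racahD2 0 (N : ℝ) 0 0 (n + 1))
      = Real.sqrt ((2 * (n : ℝ) + 3) / (2 * (n : ℝ) + 1))
        * Real.sqrt (y / racahD2 0 (N : ℝ) 0 0 n)
        / (((N : ℝ) + n + 1) * ((N : ℝ) - n - 1)) := by
  have h' : (n : ℝ) + 2 ≤ N := by exact_mod_cast h
  have hp : (0 : ℝ) < (N : ℝ) - n - 1 := by linarith
  have hc : 0 < ((N : ℝ) + n + 1) * ((N : ℝ) - n - 1) := by positivity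
  rw [racahD2_succ N n h]
  generalize ((N : ℝ) + n + 1) * ((N : ℝ) - n - 1) = c at hc
  have e : y / (racahD2 0 (N : ℝ) 0 0 n * c ^ 2 * ((2 * n + 1) / (2 * n + 3)))
      = ((2 * (n : ℝ) + 3) / (2 * (n : ℝ) + 1)) * (y / racahD2 0 (N : ℝ) 0 0 n) / c ^ 2 := by
    rw [← div_div, ← div_div, div_div_eq_mul_div]
    ring
  rw [e, Real.sqrt_div' _ (by positivity), Real.sqrt_sq hc.le, Real.sqrt_mul (by positivity)]

lemma hat_eq (N n : ℕ) (s : ℝ) (h0 : 0 ≤ s) (h1 : s < N) :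
    racahHat 0 (N : ℝ) 0 0 n s
      = racahR 0 (N : ℝ) 0 0 n s * Real.sqrt ((2 * s + 1) / racahD2 0 (N : ℝ) 0 0 n) := by
  rw [racahHat, racahW_one N s h0 h1, one_mul]

lemma racahR_zero (b s : ℝ) : racahR 0 b 0 0 0 s = 1 := by
  simp [racahR, pochR_zero']

lemma racahR_one (N : ℕ) (hN : 2 ≤ N) (s : ℝ) :
    racahR 0 (N : ℝ) 0 0 1 s = -((N : ℝ) ^ 2 - 2 * s ^ 2 - 2 * s - 1) := by
  have h' : (2 : ℝ) ≤ N := by exact_mod_cast hN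
  have h1 : (1 : ℝ) - N ≠ 0 := by intro h; linarith
  have h2 : (N : ℝ) + 1 ≠ 0 := by positivity
  have e2 : (-N : ℝ) + 1 = 1 - N := by ring
  simp [racahR, pochR, Finset.sum_range_succ, e2]
  field_simp
  ring

lemma hat_zero (N : ℕ) (hN : 1 ≤ N) (s : ℝ) (h0 : 0 ≤ s) (h1 : s < N) :
    racahHat 0 (N : ℝ) 0 0 0 s = Real.sqrt (2 * s + 1) / N := by
  rw [hat_eq N 0 s h0 h1, racahR_zero, racahD2_zero N hN, one_mul,
    Real.sqrt_div' _ (by positivity), Real.sqrt_sq (by positivity)]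

theorem racah_special_case_initial_values
    (N : ℕ) (hN : 2 ≤ N) :
    (∀ s : ℕ, s ≤ N - 1 →
        racahHat 0 (N : ℝ) 0 0 0 (s : ℝ) = Real.sqrt (2 * (s : ℝ) + 1) / (N : ℝ)) ∧
      racahHat 0 (N : ℝ) 0 0 0 ((N : ℝ) - 1) =
        Real.sqrt (2 * (N : ℝ) - 1) / (N : ℝ) ∧
      (∀ s : ℕ, s ≤ N - 2 →
        racahHat 0 (N : ℝ) 0 0 0 (s : ℝ) =
          Real.sqrt ((2 * (s : ℝ) + 1) / (2 * (s : ℝ) + 3)) *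
            racahHat 0 (N : ℝ) 0 0 0 ((s : ℝ) + 1)) ∧
      (∀ s : ℕ, s ≤ N - 1 →
        racahHat 0 (N : ℝ) 0 0 1 (s : ℝ) =
          -((N : ℝ) ^ 2 - 2 * (s : ℝ) ^ 2 - 2 * (s : ℝ) - 1) * Real.sqrt 3 /
              ((N : ℝ) ^ 2 - 1) *
            racahHat 0 (N : ℝ) 0 0 0 (s : ℝ)) ∧
      (∀ n : ℕ, n ≤ N - 2 →
        racahHat 0 (N : ℝ) 0 0 (n + 1) ((N : ℝ) - 1) =
          (((N : ℝ) - n - 1) / ((N : ℝ) + n + 1)) *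
            Real.sqrt ((2 * (n : ℝ) + 3) / (2 * (n : ℝ) + 1)) *
            racahHat 0 (N : ℝ) 0 0 n ((N : ℝ) - 1)) := by
  have hN' : (2 : ℝ) ≤ N := by exact_mod_cast hN
  have lt : ∀ s : ℕ, s ≤ N - 1 → (s : ℝ) < N := fun s hs => by
    exact_mod_cast (by omega : s < N)
  refine ⟨fun s hs => hat_zero N (by omega) s (by positivity) (lt s hs), ?_, ?_, ?_, ?_⟩
  · rw [hat_zero N (by omega) _ (by linarith) (by linarith)]
    congr 2
    ring
  · intro s hs
    have h1 := lt (s + 1) (by omega)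
    push_cast at h1
    rw [hat_zero N (by omega) _ (by positivity) (lt s (by omega)),
      hat_zero N (by omega) _ (by positivity) h1,
      show 2 * ((s : ℝ) + 1) + 1 = 2 * s + 3 by ring, Real.sqrt_div (by positivity)]
    have : Real.sqrt (2 * (s : ℝ) + 3) ≠ 0 := (Real.sqrt_pos.2 (by positivity)).ne'
    field_simp
  · intro s hs
    have h := sqrt_succ N 0 (by omega) (2 * (s : ℝ) + 1)
    rw [hat_eq N 1 _ (by positivity) (lt s hs), hat_eq N 0 _ (by positivity) (lt s hs),
      racahR_zero, racahR_one N hN]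
    rw [zero_add] at h
    rw [h]
    have e : (2 * ((0 : ℕ) : ℝ) + 3) / (2 * ((0 : ℕ) : ℝ) + 1) = 3 := by norm_num
    have e' : ((N : ℝ) + ((0 : ℕ) : ℝ) + 1) * ((N : ℝ) - ((0 : ℕ) : ℝ) - 1) = (N : ℝ) ^ 2 - 1 := by
      push_cast
      ring
    rw [e, e']
    ring
  · intro n hn
    have hn' : (n : ℝ) + 2 ≤ N := by exact_mod_cast (by omega : n + 2 ≤ N)
    have h0 : (0 : ℝ) ≤ (N : ℝ) - 1 := by linarith
    have h1 : (N : ℝ) - 1 < N := by linarith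
    rw [hat_eq N (n + 1) _ h0 h1, hat_eq N n _ h0 h1, sqrt_succ N n (by omega),
      racahR_end N n (by omega), racahR_end N (n + 1) (by omega), pochR_succ']
    have hp : (N : ℝ) - n - 1 ≠ 0 := by intro h; linarith
    have hq : (N : ℝ) + n + 1 ≠ 0 := by positivity
    field_simp
    ring
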